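/- arXiv:1405.7578 — 6 statements merged into one kernel-verified Lean document; each statement's English description precedes it below -/
import Mathlib

section
/- Let c > 0, let m, n be positive integers, and let S > 2cmn/sqrt(m^2 + n^2). Every point (x, y) satisfying m·sqrt((x - c)^2 + y^2) + n·sqrt((x + c)^2 + y^2) = S lies in the closed disc (x - c(m^2 - n^2)/(m^2 + n^2))^2 + y^2 <= R^2, where R = sqrt(S^2 (m^2 + n^2) - 4 c^2 m^2 n^2)/(m^2 + n^2). -/
theorem cartesian_oval_plus_in_disc
    (c : ℝ) (hc : 0 < c) (m n : ℕ) (hm : 0 < m) (hn : 0 < n)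
    (S : ℝ) (hS : S > 2 * c * m * n / Real.sqrt ((m : ℝ) ^ 2 + (n : ℝ) ^ 2))
    (x y : ℝ)
    (h : (m : ℝ) * Real.sqrt ((x - c) ^ 2 + y ^ 2)
        + (n : ℝ) * Real.sqrt ((x + c) ^ 2 + y ^ 2) = S) :
    (x - c * ((m : ℝ) ^ 2 - (n : ℝ) ^ 2) / ((m : ℝ) ^ 2 + (n : ℝ) ^ 2)) ^ 2 + y ^ 2 ≤
      (Real.sqrt (S ^ 2 * ((m : ℝ) ^ 2 + (n : ℝ) ^ 2) - 4 * c ^ 2 * (m : ℝ) ^ 2 * (n : ℝ) ^ 2)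
        / ((m : ℝ) ^ 2 + (n : ℝ) ^ 2)) ^ 2 := by
  have hm' : (0 : ℝ) < m := by exact_mod_cast hm
  have hn' : (0 : ℝ) < n := by exact_mod_cast hn
  generalize (m : ℝ) = a at *
  generalize (n : ℝ) = b at *
  have h1 := Real.sq_sqrt (show 0 ≤ (x - c) ^ 2 + y ^ 2 by positivity)
  have h2 := Real.sq_sqrt (show 0 ≤ (x + c) ^ 2 + y ^ 2 by positivity)
  have p1 := Real.sqrt_nonneg ((x - c) ^ 2 + y ^ 2)
  have p2 := Real.sqrt_nonneg ((x + c) ^ 2 + y ^ 2)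
  generalize Real.sqrt ((x - c) ^ 2 + y ^ 2) = u at *
  generalize Real.sqrt ((x + c) ^ 2 + y ^ 2) = v at *
  have hA : 0 < a ^ 2 + b ^ 2 := by positivity
  have h3 : a ^ 2 * ((x - c) ^ 2 + y ^ 2) + b ^ 2 * ((x + c) ^ 2 + y ^ 2) ≤ S ^ 2 := by
    rw [← h1, ← h2, ← h]
    have : 0 ≤ a * u * (b * v) := by positivity
    nlinarith
  have h4 : ((a ^ 2 + b ^ 2) * x - c * (a ^ 2 - b ^ 2)) ^ 2 + (a ^ 2 + b ^ 2) ^ 2 * y ^ 2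
      ≤ S ^ 2 * (a ^ 2 + b ^ 2) - 4 * c ^ 2 * a ^ 2 * b ^ 2 := by
    have := mul_le_mul_of_nonneg_right h3 hA.le
    linarith
  have h5 : 0 ≤ S ^ 2 * (a ^ 2 + b ^ 2) - 4 * c ^ 2 * a ^ 2 * b ^ 2 :=
    le_trans (by positivity) h4
  rw [div_pow, Real.sq_sqrt h5, le_div_iff₀ (by positivity)]
  refine le_trans (le_of_eq ?_) h4
  field_simp
end

section
/- Let c > 0, let m, n be positive integers, and let S > 2cmn/sqrt(m^2 + n^2). Every point (x, y) satisfying m·sqrt((x - c)^2 + y^2) - n·sqrt((x + c)^2 + y^2) = S lies in the closed exterior (x - c(m^2 - n^2)/(m^2 + n^2))^2 + y^2 >= R^2 of the circle with center (c(m^2 - n^2)/(m^2 + n^2), 0) and radius R = sqrt(S^2 (m^2 + n^2) - 4 c^2 m^2 n^2)/(m^2 + n^2). -/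
theorem cartesian_oval_minus_in_exterior
    (c : ℝ) (hc : 0 < c) (m n : ℕ) (hm : 0 < m) (hn : 0 < n)
    (S : ℝ) (hS : S > 2 * c * m * n / Real.sqrt ((m : ℝ) ^ 2 + (n : ℝ) ^ 2))
    (x y : ℝ)
    (h : (m : ℝ) * Real.sqrt ((x - c) ^ 2 + y ^ 2)
        - (n : ℝ) * Real.sqrt ((x + c) ^ 2 + y ^ 2) = S) :
    (x - c * ((m : ℝ) ^ 2 - (n : ℝ) ^ 2) / ((m : ℝ) ^ 2 + (n : ℝ) ^ 2)) ^ 2 + y ^ 2 ≥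
      (Real.sqrt (S ^ 2 * ((m : ℝ) ^ 2 + (n : ℝ) ^ 2) - 4 * c ^ 2 * (m : ℝ) ^ 2 * (n : ℝ) ^ 2)
        / ((m : ℝ) ^ 2 + (n : ℝ) ^ 2)) ^ 2 := by
  have hm' : (0:ℝ) < m := by exact_mod_cast hm
  have hn' : (0:ℝ) < n := by exact_mod_cast hn
  generalize (m : ℝ) = a at *
  generalize (n : ℝ) = b at *
  have hM : 0 < a ^ 2 + b ^ 2 := by positivity
  have hs : 0 < Real.sqrt (a ^ 2 + b ^ 2) := Real.sqrt_pos.mpr hM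
  have hsq := Real.sq_sqrt hM.le
  have h1 : 2 * c * a * b < S * Real.sqrt (a ^ 2 + b ^ 2) := (div_lt_iff₀ hs).mp hS
  have h2 : (2 * c * a * b) ^ 2 ≤ (S * Real.sqrt (a ^ 2 + b ^ 2)) ^ 2 :=
    pow_le_pow_left₀ (by positivity) h1.le 2
  rw [mul_pow S, hsq] at h2
  have h3 : 0 ≤ S ^ 2 * (a ^ 2 + b ^ 2) - 4 * c ^ 2 * a ^ 2 * b ^ 2 := by nlinarith
  rw [div_pow, Real.sq_sqrt h3, ge_iff_le, div_le_iff₀ (by positivity)]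
  have hA : 0 ≤ (x - c) ^ 2 + y ^ 2 := by positivity
  have hB : 0 ≤ (x + c) ^ 2 + y ^ 2 := by positivity
  have q1 := Real.sq_sqrt hA
  have q2 := Real.sq_sqrt hB
  have p1 := Real.sqrt_nonneg ((x - c) ^ 2 + y ^ 2)
  have p2 := Real.sqrt_nonneg ((x + c) ^ 2 + y ^ 2)
  generalize Real.sqrt ((x - c) ^ 2 + y ^ 2) = r at *
  generalize Real.sqrt ((x + c) ^ 2 + y ^ 2) = t at *
  have h4 : S ^ 2 ≤ a ^ 2 * ((x - c) ^ 2 + y ^ 2) + b ^ 2 * ((x + c) ^ 2 + y ^ 2) := by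
    rw [← q1, ← q2, ← h]
    have : 0 ≤ (a * r) * (b * t) := by positivity
    nlinarith
  have h5 : ((x - c * (a ^ 2 - b ^ 2) / (a ^ 2 + b ^ 2)) ^ 2 + y ^ 2) * (a ^ 2 + b ^ 2) ^ 2
      = (a ^ 2 * ((x - c) ^ 2 + y ^ 2) + b ^ 2 * ((x + c) ^ 2 + y ^ 2)) * (a ^ 2 + b ^ 2)
        - 4 * c ^ 2 * a ^ 2 * b ^ 2 := by
    field_simp
    ring
  rw [h5]
  have := mul_le_mul_of_nonneg_right h4 hM.le
  linarith
end

section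
/- Let c > 0, let m, n be positive integers, and let S > 0. Set Q1 = (x - c)^2 + y^2 and Q2 = (x + c)^2 + y^2. If a point (x, y) satisfies the algebraic equation 4 m^2 n^2 Q1 Q2 = (S^2 - m^2 Q1 - n^2 Q2)^2 together with the condition S^2 - m^2 Q1 - n^2 Q2 <= 0, then |m·sqrt(Q1) - n·sqrt(Q2)| = S. -/
theorem cartesian_oval_minus_extraction
    (c : ℝ) (hc : 0 < c) (m n : ℕ) (hm : 0 < m) (hn : 0 < n)
    (S : ℝ) (hS : 0 < S) (x y : ℝ)
    (Q1 Q2 : ℝ) (hQ1 : Q1 = (x - c) ^ 2 + y ^ 2) (hQ2 : Q2 = (x + c) ^ 2 + y ^ 2)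
    (halg : 4 * (m : ℝ) ^ 2 * (n : ℝ) ^ 2 * Q1 * Q2
        = (S ^ 2 - (m : ℝ) ^ 2 * Q1 - (n : ℝ) ^ 2 * Q2) ^ 2)
    (hext : S ^ 2 - (m : ℝ) ^ 2 * Q1 - (n : ℝ) ^ 2 * Q2 ≤ 0) :
    |(m : ℝ) * Real.sqrt Q1 - (n : ℝ) * Real.sqrt Q2| = S := by
  have h1 : Real.sqrt Q1 ^ 2 = Q1 := Real.sq_sqrt (by rw [hQ1]; positivity)
  have h2 : Real.sqrt Q2 ^ 2 = Q2 := Real.sq_sqrt (by rw [hQ2]; positivity)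
  have p1 : 0 ≤ Real.sqrt Q1 := Real.sqrt_nonneg _
  have p2 : 0 ≤ Real.sqrt Q2 := Real.sqrt_nonneg _
  generalize Real.sqrt Q1 = a at *
  generalize Real.sqrt Q2 = b at *
  clear hQ1 hQ2
  subst h1 h2
  have key : 2 * (m : ℝ) * n * a * b = -(S ^ 2 - (m : ℝ) ^ 2 * a ^ 2 - (n : ℝ) ^ 2 * b ^ 2) := by
    refine (sq_eq_sq₀ (by positivity) (by linarith)).mp ?_
    linarith
  rw [← abs_of_pos hS]
  apply (sq_eq_sq_iff_abs_eq_abs _ _).mp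
  linarith
end

section
/- Let p, q, r be real numbers and S > 0. Every point (x, y) satisfying sqrt((x - p)^2 + y^2) + sqrt((x - q)^2 + y^2) + sqrt(x^2 + (y - r)^2) = S satisfies the eighth-order algebraic equation 64 S^2 Q1 Q2 Q3 = ((S^2 + Q3 - Q2 - Q1)^2 - 4 Q1 Q2 - 4 S^2 Q3)^2, where Q1 = (x - p)^2 + y^2, Q2 = (x - q)^2 + y^2, Q3 = x^2 + (y - r)^2. -/
theorem trifocal_ellipse_satisfies_octic
    (p q r S : ℝ) (hS : 0 < S) (x y : ℝ)
    (Q1 Q2 Q3 : ℝ) (hQ1 : Q1 = (x - p) ^ 2 + y ^ 2) (hQ2 : Q2 = (x - q) ^ 2 + y ^ 2)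
    (hQ3 : Q3 = x ^ 2 + (y - r) ^ 2)
    (h : Real.sqrt Q1 + Real.sqrt Q2 + Real.sqrt Q3 = S) :
    64 * S ^ 2 * Q1 * Q2 * Q3
      = ((S ^ 2 + Q3 - Q2 - Q1) ^ 2 - 4 * Q1 * Q2 - 4 * S ^ 2 * Q3) ^ 2 := by
  have h1 : 0 ≤ Q1 := by rw [hQ1]; positivity
  have h2 : 0 ≤ Q2 := by rw [hQ2]; positivity
  have h3 : 0 ≤ Q3 := by rw [hQ3]; positivity
  clear hQ1 hQ2 hQ3
  obtain ⟨a, ha⟩ : ∃ a, a = Real.sqrt Q1 := ⟨_, rfl⟩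
  obtain ⟨b, hb⟩ : ∃ b, b = Real.sqrt Q2 := ⟨_, rfl⟩
  obtain ⟨c, hc⟩ : ∃ c, c = Real.sqrt Q3 := ⟨_, rfl⟩
  have e1 : Q1 = a ^ 2 := by rw [ha, Real.sq_sqrt h1]
  have e2 : Q2 = b ^ 2 := by rw [hb, Real.sq_sqrt h2]
  have e3 : Q3 = c ^ 2 := by rw [hc, Real.sq_sqrt h3]
  rw [← ha, ← hb, ← hc] at h
  rw [e1, e2, e3, ← h]
  ring
end

section
/- Let p, q, r be real numbers and S > 0, and let (x, y) be a point with Q1 = (x - p)^2 + y^2, Q2 = (x - q)^2 + y^2, Q3 = x^2 + (y - r)^2. Suppose (x, y) satisfies the eighth-order algebraic equation 64 S^2 Q1 Q2 Q3 = ((S^2 + Q3 - Q2 - Q1)^2 - 4 Q1 Q2 - 4 S^2 Q3)^2, together with the three conditions: (i) Q3 <= S^2 (the point lies in the closed disc x^2 + (y - r)^2 <= S^2); (ii) S^2 + Q3 - Q1 - Q2 >= 0 (the point lies in the closed disc (x - p - q)^2 + (y + r)^2 <= S^2 + 2pq + 2r^2); and (iii) S^4 + Q1^2 + Q2^2 +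 Q3^2 - 2 S^2 (Q1 + Q2 + Q3) - 2 (Q1 Q2 + Q1 Q3 + Q2 Q3) >= 0. Then sqrt(Q1) + sqrt(Q2) + sqrt(Q3) = S, i.e. (x, y) lies on the trifocal ellipse R1 + R2 + R3 = S. -/
theorem trifocal_ellipse_extraction
    (p q r S : ℝ) (hS : 0 < S) (x y : ℝ)
    (Q1 Q2 Q3 : ℝ) (hQ1 : Q1 = (x - p) ^ 2 + y ^ 2) (hQ2 : Q2 = (x - q) ^ 2 + y ^ 2)
    (hQ3 : Q3 = x ^ 2 + (y - r) ^ 2)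
    (halg : 64 * S ^ 2 * Q1 * Q2 * Q3
        = ((S ^ 2 + Q3 - Q2 - Q1) ^ 2 - 4 * Q1 * Q2 - 4 * S ^ 2 * Q3) ^ 2)
    (h1 : Q3 ≤ S ^ 2)
    (h2 : S ^ 2 + Q3 - Q1 - Q2 ≥ 0)
    (h3 : S ^ 4 + Q1 ^ 2 + Q2 ^ 2 + Q3 ^ 2 - 2 * S ^ 2 * (Q1 + Q2 + Q3)
        - 2 * (Q1 * Q2 + Q1 * Q3 + Q2 * Q3) ≥ 0) :
    Real.sqrt Q1 + Real.sqrt Q2 + Real.sqrt Q3 = S := by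
  have p1 : 0 ≤ Q1 := by rw [hQ1]; positivity
  have p2 : 0 ≤ Q2 := by rw [hQ2]; positivity
  have p3 : 0 ≤ Q3 := by rw [hQ3]; positivity
  clear hQ1 hQ2 hQ3
  obtain ⟨a, ha, rfl⟩ : ∃ a : ℝ, 0 ≤ a ∧ a ^ 2 = Q1 := ⟨√Q1, Real.sqrt_nonneg _, Real.sq_sqrt p1⟩
  obtain ⟨b, hb, rfl⟩ : ∃ a : ℝ, 0 ≤ a ∧ a ^ 2 = Q2 := ⟨√Q2, Real.sqrt_nonneg _, Real.sq_sqrt p2⟩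
  obtain ⟨c, hc, rfl⟩ : ∃ a : ℝ, 0 ≤ a ∧ a ^ 2 = Q3 := ⟨√Q3, Real.sqrt_nonneg _, Real.sq_sqrt p3⟩
  rw [Real.sqrt_sq ha, Real.sqrt_sq hb, Real.sqrt_sq hc]
  have hcS : c ≤ S := (sq_le_sq₀ hc hS.le).1 h1
  have k1 : 8 * S * a * b * c
      = (S ^ 2 + c ^ 2 - b ^ 2 - a ^ 2) ^ 2 - 4 * a ^ 2 * b ^ 2 - 4 * S ^ 2 * c ^ 2 := by
    refine (sq_eq_sq₀ (by positivity) ?_).1 ?_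
    · linarith
    · rw [← halg]; ring
  have k2 : S ^ 2 + c ^ 2 - a ^ 2 - b ^ 2 = 2 * a * b + 2 * S * c := by
    refine (sq_eq_sq₀ h2 (by positivity)).1 ?_
    linarith
  have k3 : a + b = S - c := by
    refine (sq_eq_sq₀ (by positivity) (by linarith)).1 ?_
    linarith
  linarith
end

section
/- Let A, B, C be three non-collinear points in the Euclidean plane and let P be a point in the interior of the triangle ABC. Let R1, R2, R3 be the distances from P to the vertices A, B, C, and let r1, r2, r3 be the distances from P to the lines BC, CA, AB. Then R1 + R2 + R3 >= 2(r1 + r2 + r3) (the Erdős–Mordell inequality). -/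
lemma em_quad (p q r c1 c2 c3 : ℝ) (hq : 0 ≤ q) (hr : 0 ≤ r)
    (h1 : 0 ≤ c1) (h2 : 0 ≤ c2) (h3 : 0 ≤ c3)
    (h : c1 ^ 2 + c2 ^ 2 + c3 ^ 2 + 2 * (c1 * c2 * c3) = 1) :
    2 * (q * r * c1 + r * p * c2 + p * q * c3) ≤ p ^ 2 + q ^ 2 + r ^ 2 := by
  have hp : 0 ≤ c1 * c2 * c3 := by positivity
  have e2 : 0 ≤ 1 - c2 ^ 2 := by nlinarith [sq_nonneg c1, sq_nonneg c3]
  have e3 : 0 ≤ 1 - c3 ^ 2 := by nlinarith [sq_nonneg c1, sq_nonneg c2]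
  obtain ⟨s2, hs2, hs2'⟩ : ∃ s, 0 ≤ s ∧ s ^ 2 = 1 - c2 ^ 2 :=
    ⟨√(1 - c2 ^ 2), Real.sqrt_nonneg _, Real.sq_sqrt e2⟩
  obtain ⟨s3, hs3, hs3'⟩ : ∃ s, 0 ≤ s ∧ s ^ 2 = 1 - c3 ^ 2 :=
    ⟨√(1 - c3 ^ 2), Real.sqrt_nonneg _, Real.sq_sqrt e3⟩
  have key : c1 + c2 * c3 = s2 * s3 := by
    rw [← sq_eq_sq₀ (by positivity) (by positivity), mul_pow, hs2', hs3']
    linarith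
  have k1 : c1 = s2 * s3 - c2 * c3 := by linarith
  subst k1
  have : p ^ 2 + q ^ 2 + r ^ 2 - 2 * (q * r * (s2 * s3 - c2 * c3) + r * p * c2 + p * q * c3)
      = (p - q * c3 - r * c2) ^ 2 + (q * s3 - r * s2) ^ 2 := by
    linear_combination (-r^2) * hs2' - q^2 * hs3'
  nlinarith [sq_nonneg (p - q * c3 - r * c2), sq_nonneg (q * s3 - r * s2)]

lemma em_dist (B C P : EuclideanSpace ℝ (Fin 2)) (k : ℝ) (hk : 0 ≤ k)
    (hB : 0 < ‖B - P‖) (hC : 0 < ‖C - P‖)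
    (h : ‖B - P‖ * ‖C - P‖ + inner ℝ (B - P) (C - P) = 2 * k ^ 2) :
    Metric.infDist P (affineSpan ℝ ({B, C} : Set (EuclideanSpace ℝ (Fin 2))) :
      Set (EuclideanSpace ℝ (Fin 2))) ≤ k := by
  set t := ‖B - P‖ / (‖B - P‖ + ‖C - P‖) with ht
  refine (Metric.infDist_le_dist_of_mem
    (AffineMap.lineMap_mem_affineSpan_pair (k := ℝ) t B C)).trans ?_
  have e : AffineMap.lineMap B C t - P = (1 - t) • (B - P) + t • (C - P) := by
    rw [AffineMap.lineMap_apply_module]; module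
  rw [dist_comm, dist_eq_norm, e, ← sq_le_sq₀ (norm_nonneg _) hk, norm_add_sq_real,
    norm_smul, norm_smul, inner_smul_left, inner_smul_right, mul_pow, mul_pow]
  simp only [Real.norm_eq_abs, sq_abs, RCLike.conj_to_real]
  have hi : inner ℝ (B - P) (C - P) = 2 * k ^ 2 - ‖B - P‖ * ‖C - P‖ := by linarith
  rw [hi]
  generalize ‖B - P‖ = b at *
  generalize ‖C - P‖ = c at *
  have h1 : 1 - t = c / (b + c) := by rw [ht]; field_simp; ring
  rw [h1, ht]
  have : (c / (b + c)) ^ 2 * b ^ 2 + 2 * (c / (b + c) * (b / (b + c) * (2 * k ^ 2 - b * c))) +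
      (b / (b + c)) ^ 2 * c ^ 2 = 4 * (b * c) * k ^ 2 / (b + c) ^ 2 := by
    field_simp; ring
  rw [this, div_le_iff₀ (by positivity)]
  nlinarith [mul_nonneg (sq_nonneg k) (sq_nonneg (b - c))]

lemma em_tri {E : Type*} [NormedAddCommGroup E] [InnerProductSpace ℝ E] (x y z : E) (α β γ : ℝ)
    (ha : 0 < α) (hb : 0 < β) (hc : 0 < γ) (h : α • x + β • y + γ • z = 0) :
    α * ‖x‖ ≤ β * ‖y‖ + γ * ‖z‖ ∧
    (α * ‖x‖) ^ 2 = (β * ‖y‖) ^ 2 + (γ * ‖z‖) ^ 2 + 2 * (β * γ * inner ℝ y z) := by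
  have e : α * ‖x‖ = ‖β • y + γ • z‖ := by
    have : β • y + γ • z = -(α • x) := by
      rw [eq_neg_iff_add_eq_zero, ← h]; abel
    rw [this, norm_neg, norm_smul, Real.norm_of_nonneg ha.le]
  have e2 : β * ‖y‖ = ‖β • y‖ := by rw [norm_smul, Real.norm_of_nonneg hb.le]
  have e3 : γ * ‖z‖ = ‖γ • z‖ := by rw [norm_smul, Real.norm_of_nonneg hc.le]
  refine ⟨by rw [e, e2, e3]; exact norm_add_le _ _, ?_⟩
  rw [e, e2, e3, norm_add_sq_real, inner_smul_left, inner_smul_right]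
  simp only [RCLike.conj_to_real]; ring

lemma em_main (A B C P : EuclideanSpace ℝ (Fin 2)) (α β γ : ℝ)
    (ha : 0 < α) (hb : 0 < β) (hc : 0 < γ)
    (hA : 0 < ‖A - P‖) (hB : 0 < ‖B - P‖) (hC : 0 < ‖C - P‖)
    (h : α • (A - P) + β • (B - P) + γ • (C - P) = 0) :
    dist P A + dist P B + dist P C ≥
      2 * (Metric.infDist P (affineSpan ℝ ({B, C} : Set (EuclideanSpace ℝ (Fin 2))) : Set (EuclideanSpace ℝ (Fin 2)))
        + Metric.infDist P (affineSpan ℝ ({C, A} : Set (EuclideanSpace ℝ (Fin 2))) : Set (EuclideanSpace ℝ (Fin 2)))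
        + Metric.infDist P (affineSpan ℝ ({A, B} : Set (EuclideanSpace ℝ (Fin 2))) : Set (EuclideanSpace ℝ (Fin 2)))) := by
  obtain ⟨t1, i1⟩ := em_tri _ _ _ α β γ ha hb hc h
  obtain ⟨t2, i2⟩ := em_tri (B - P) (C - P) (A - P) β γ α hb hc ha (by rw [← h]; abel)
  obtain ⟨t3, i3⟩ := em_tri (C - P) (A - P) (B - P) γ α β hc ha hb (by rw [← h]; abel)
  have d1 := fun k hk => em_dist B C P k hk hB hC
  have d2 := fun k hk => em_dist C A P k hk hC hA
  have d3 := fun k hk => em_dist A B P k hk hA hB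
  rw [dist_comm P A, dist_comm P B, dist_comm P C, dist_eq_norm, dist_eq_norm, dist_eq_norm]
  generalize Metric.infDist P (affineSpan ℝ ({B, C} : Set (EuclideanSpace ℝ (Fin 2))) : Set (EuclideanSpace ℝ (Fin 2))) = r1 at *
  generalize Metric.infDist P (affineSpan ℝ ({C, A} : Set (EuclideanSpace ℝ (Fin 2))) : Set (EuclideanSpace ℝ (Fin 2))) = r2 at *
  generalize Metric.infDist P (affineSpan ℝ ({A, B} : Set (EuclideanSpace ℝ (Fin 2))) : Set (EuclideanSpace ℝ (Fin 2))) = r3 at *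
  generalize inner ℝ (B - P) (C - P) = m1 at *
  generalize inner ℝ (C - P) (A - P) = m2 at *
  generalize inner ℝ (A - P) (B - P) = m3 at *
  generalize ‖A - P‖ = R1 at *
  generalize ‖B - P‖ = R2 at *
  generalize ‖C - P‖ = R3 at *
  clear h
  obtain ⟨a, haa⟩ : ∃ a, a = α * R1 := ⟨_, rfl⟩
  obtain ⟨b, hbb⟩ : ∃ a, a = β * R2 := ⟨_, rfl⟩
  obtain ⟨c, hcc⟩ : ∃ a, a = γ * R3 := ⟨_, rfl⟩
  have pa : 0 < a := by rw [haa]; positivity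
  have pb : 0 < b := by rw [hbb]; positivity
  have pc : 0 < c := by rw [hcc]; positivity
  rw [← haa, ← hbb, ← hcc] at t1 t2 t3 i1 i2 i3
  have X : 0 ≤ b + c - a := by linarith
  have Y : 0 ≤ c + a - b := by linarith
  have Z : 0 ≤ a + b - c := by linarith
  have key : ∀ u v w : ℝ, 0 ≤ u → 0 < v → 0 < w → 0 ≤ w + u - v → 0 ≤ u + v - w →
      ∃ k, 0 ≤ k ∧ k ^ 2 = (w + u - v) * (u + v - w) / (4 * (v * w)) := fun u v w hu hv hw h1 h2 =>
    ⟨√((w + u - v) * (u + v - w) / (4 * (v * w))), Real.sqrt_nonneg _, Real.sq_sqrt (by positivity)⟩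
  obtain ⟨c1, n1, s1⟩ := key a b c pa.le pb pc Y Z
  obtain ⟨c2, n2, s2⟩ := key b c a pb.le pc pa Z X
  obtain ⟨c3, n3, s3⟩ := key c a b pc.le pa pb X Y
  have prod : c1 * c2 * c3 = (b + c - a) * (c + a - b) * (a + b - c) / (8 * (a * b * c)) := by
    rw [← sq_eq_sq₀ (by positivity) (by positivity), mul_pow, mul_pow, s1, s2, s3]
    field_simp; ring
  have tot : c1 ^ 2 + c2 ^ 2 + c3 ^ 2 + 2 * (c1 * c2 * c3) = 1 := by
    rw [prod, s1, s2, s3]; field_simp; ring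
  obtain ⟨p, hp, rfl⟩ : ∃ p, 0 < p ∧ p ^ 2 = R1 := ⟨√R1, Real.sqrt_pos.2 hA, Real.sq_sqrt hA.le⟩
  obtain ⟨q, hq, rfl⟩ : ∃ p, 0 < p ∧ p ^ 2 = R2 := ⟨√R2, Real.sqrt_pos.2 hB, Real.sq_sqrt hB.le⟩
  obtain ⟨r, hr, rfl⟩ : ∃ p, 0 < p ∧ p ^ 2 = R3 := ⟨√R3, Real.sqrt_pos.2 hC, Real.sq_sqrt hC.le⟩
  have aux : ∀ u v w β γ q r m k : ℝ, 0 < β → 0 < γ → 0 < q → 0 < r → v = β * q ^ 2 →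
      w = γ * r ^ 2 → u ^ 2 = v ^ 2 + w ^ 2 + 2 * (β * γ * m) →
      k ^ 2 = (w + u - v) * (u + v - w) / (4 * (v * w)) →
      q ^ 2 * r ^ 2 + m = 2 * (q * r * k) ^ 2 := by
    intro u v w β γ q r m k hβ hγ hq hr hv hw hi hk
    have hm : m = (u ^ 2 - v ^ 2 - w ^ 2) / (2 * (β * γ)) := by
      field_simp; linarith
    rw [mul_pow, hk, hm, hv, hw]
    field_simp; ring
  have f1 := d1 (q * r * c1) (by positivity) (aux a b c β γ q r m1 c1 hb hc hq hr hbb hcc i1 s1)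
  have f2 := d2 (r * p * c2) (by positivity) (aux b c a γ α r p m2 c2 hc ha hr hp hcc haa i2 s2)
  have f3 := d3 (p * q * c3) (by positivity) (aux c a b α β p q m3 c3 ha hb hp hq haa hbb i3 s3)
  have := em_quad p q r c1 c2 c3 hq.le hr.le n1 n2 n3 tot
  linarith

theorem erdos_mordell_inequality
    (A B C P : EuclideanSpace ℝ (Fin 2))
    (hABC : ¬ Collinear ℝ ({A, B, C} : Set (EuclideanSpace ℝ (Fin 2))))
    (hP : P ∈ interior (convexHull ℝ ({A, B, C} : Set (EuclideanSpace ℝ (Fin 2))))) :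
    dist P A + dist P B + dist P C ≥
      2 * (Metric.infDist P (affineSpan ℝ ({B, C} : Set (EuclideanSpace ℝ (Fin 2))) : Set (EuclideanSpace ℝ (Fin 2)))
        + Metric.infDist P (affineSpan ℝ ({C, A} : Set (EuclideanSpace ℝ (Fin 2))) : Set (EuclideanSpace ℝ (Fin 2)))
        + Metric.infDist P (affineSpan ℝ ({A, B} : Set (EuclideanSpace ℝ (Fin 2))) : Set (EuclideanSpace ℝ (Fin 2)))) := by
  have hi : AffineIndependent ℝ ![A, B, C] := by
    rwa [affineIndependent_iff_not_collinear_set]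
  have hs : affineSpan ℝ (Set.range ![A, B, C]) = ⊤ := by
    rw [hi.affineSpan_eq_top_iff_card_eq_finrank_add_one]; simp
  let b : AffineBasis (Fin 3) ℝ (EuclideanSpace ℝ (Fin 2)) := ⟨![A, B, C], hi, hs⟩
  have hr : ({A, B, C} : Set (EuclideanSpace ℝ (Fin 2))) = Set.range b := by
    change _ = Set.range ![A, B, C]
    ext x; simp [eq_comm]; tauto
  rw [hr, AffineBasis.interior_convexHull] at hP
  have hP : ∀ i, 0 < b.coord i P := hP
  have h1 := b.sum_coord_apply_eq_one P
  have h2 := b.linear_combination_coord_eq_self P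
  have ne : ∀ i, b i ≠ P := by
    intro i hi
    have := hP (i + 1)
    rw [← hi, b.coord_apply_ne (by fin_cases i <;> simp)] at this
    exact lt_irrefl _ this
  have pos : ∀ i, 0 < ‖b i - P‖ := fun i => norm_pos_iff.2 (sub_ne_zero.2 (ne i))
  refine em_main A B C P _ _ _ (hP 0) (hP 1) (hP 2) (pos 0) (pos 1) (pos 2) ?_
  rw [Fin.sum_univ_three] at h1 h2
  have h2 : b.coord 0 P • A + b.coord 1 P • B + b.coord 2 P • C = P := h2
  calc _ = (b.coord 0 P • A + b.coord 1 P • B + b.coord 2 P • C)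
        - (b.coord 0 P + b.coord 1 P + b.coord 2 P) • P := by module
    _ = 0 := by rw [h2, h1]; simp
end
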